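/- Let S be a strata-connected subset of chambers of a hyperplane arrangement 𝓗 in general position in ℝ^d, let H_e intersect T_S, and set S⁺ := {C ∈ S : C ⊂ H_e⁺}, S⁻ := {C ∈ S : C ⊂ H_e⁻}. Let A ∈ supp(S) with e ∈ A and write A' := A ∖ {e}. If H_f bounds T_S(A), then either H_f bounds both T_{S⁺}(A') and T_{S⁻}(A'), or H_f bounds one of T_{S⁺}(A') and T_{S⁻}(A') and intersects the other. -/

import Mathlib

open Set Topology

noncomputable section

/-- A hyperplane arrangement of `n` affine hyperplanes in `ℝ^d`, given by
nonzero normal vectors and offsets: the `i`-th hyperplane is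
`{x | ∑ j, normal i j * x j = offset i}`. -/
structure Arrangement (d n : ℕ) where
  normal : Fin n → (Fin d → ℝ)
  offset : Fin n → ℝ
  normal_ne : ∀ i, normal i ≠ 0

/-- The thickening (regular open hull) `T_S` of a set `S` of chambers. -/
def thickening {d : ℕ} (S : Set (Set (Fin d → ℝ))) : Set (Fin d → ℝ) :=
  interior (closure (⋃ C ∈ S, C))

/-- The set of connected components of a subset `X` of a topological space. -/
def connComps {α : Type*} [TopologicalSpace α] (X : Set α) : Set (Set α) :=
  {c | ∃ x ∈ X, c = connectedComponentIn X x}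

namespace Arrangement

variable {d n : ℕ} (𝓗 : Arrangement d n)

/-- The `i`-th hyperplane of the arrangement. -/
def H (i : Fin n) : Set (Fin d → ℝ) := {x | ∑ j, 𝓗.normal i j * x j = 𝓗.offset i}

/-- The positive open half-space determined by the `i`-th hyperplane. -/
def pos (i : Fin n) : Set (Fin d → ℝ) := {x | 𝓗.offset i < ∑ j, 𝓗.normal i j * x j}

/-- The negative open half-space determined by the `i`-th hyperplane. -/
def neg (i : Fin n) : Set (Fin d → ℝ) := {x | ∑ j, 𝓗.normal i j * x j < 𝓗.offset i}

/-- The complement of the union of the hyperplanes. -/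
def free : Set (Fin d → ℝ) := {x | ∀ i, x ∉ 𝓗.H i}

/-- The chambers: connected components of the complement of the hyperplanes. -/
def chambers : Set (Set (Fin d → ℝ)) :=
  {C | ∃ x ∈ 𝓗.free, C = connectedComponentIn 𝓗.free x}

/-- General position: the normals of any `≤ d` hyperplanes are linearly independent
(so that their intersection is an affine subspace of the right dimension), and no
`d+1` hyperplanes have a common point. -/
def GeneralPosition : Prop :=
  (∀ A : Finset (Fin n), A.card ≤ d →
      LinearIndependent ℝ (fun i : A => 𝓗.normal i.1)) ∧
  (∀ A : Finset (Fin n), A.card = d + 1 → (⋂ i ∈ A, 𝓗.H i) = ∅)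

/-- Hyperplane `e` separates `C` from `C'`. -/
def Separates (e : Fin n) (C C' : Set (Fin d → ℝ)) : Prop :=
  (C ⊆ 𝓗.pos e ∧ C' ⊆ 𝓗.neg e) ∨ (C ⊆ 𝓗.neg e ∧ C' ⊆ 𝓗.pos e)

/-- Adjacency in the chamber graph: two chambers are adjacent iff they are separated
by exactly one hyperplane (equivalently, share a common facet). -/
def Adj (C C' : Set (Fin d → ℝ)) : Prop :=
  C ∈ 𝓗.chambers ∧ C' ∈ 𝓗.chambers ∧ ∃! e : Fin n, 𝓗.Separates e C C'

/-- The edge boundary of a set `S` of chambers, encoded as the set of ordered pairs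
`(C, C')` of adjacent chambers with `C ∈ S` and `C' ∉ S` (each boundary edge is thus
counted exactly once). -/
def edgeBoundary (S : Set (Set (Fin d → ℝ))) :
    Set ((Set (Fin d → ℝ)) × (Set (Fin d → ℝ))) :=
  {q | q.1 ∈ S ∧ q.2 ∉ S ∧ 𝓗.Adj q.1 q.2}

/-- The stratum `T_S(A) = T_S ∩ L_A`. -/
def stratum (S : Set (Set (Fin d → ℝ))) (A : Finset (Fin n)) : Set (Fin d → ℝ) :=
  thickening S ∩ ⋂ i ∈ A, 𝓗.H i

/-- The support of `S`: those `A` with nonempty stratum. -/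
def supp (S : Set (Set (Fin d → ℝ))) : Set (Finset (Fin n)) :=
  {A | (𝓗.stratum S A).Nonempty}

/-- `H_f` bounds the stratum `T_S(A)`: the stratum lies entirely in one of the open
half-spaces of `H_f`, and `H_f` meets the closure of the stratum within `L_A`. -/
def Bounds (f : Fin n) (S : Set (Set (Fin d → ℝ))) (A : Finset (Fin n)) : Prop :=
  (𝓗.stratum S A ⊆ 𝓗.pos f ∨ 𝓗.stratum S A ⊆ 𝓗.neg f) ∧
  (𝓗.H f ∩ closure (𝓗.stratum S A) ∩ ⋂ i ∈ A, 𝓗.H i).Nonempty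

/-- `S` is strata-connected if every nonempty stratum is connected. -/
def StrataConnected (S : Set (Set (Fin d → ℝ))) : Prop :=
  ∀ A ∈ 𝓗.supp S, IsConnected (𝓗.stratum S A)

end Arrangement

/-- The generalized binomial coefficient `C(x, i) = x(x-1)⋯(x-i+1)/i!`. -/
noncomputable def gchoose (x : ℝ) (i : ℕ) : ℝ :=
  (∏ j ∈ Finset.range i, (x - j)) / (Nat.factorial i)

theorem aux_side {X : Type*} [TopologicalSpace X] {T : Set X} (hT : IsPreconnected T)
    {u w : X → ℝ} (hu : Continuous u) (hw : Continuous w)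
    (h0 : ∀ x ∈ T, u x = 0 → 0 < w x) (hne : ∃ x ∈ T, u x = 0)
    (hno : ∀ x ∈ T, 0 < u x → w x ≠ 0) : ∀ x ∈ T, 0 < u x → 0 < w x := by
  intro x hx hux
  by_contra hwx
  have hwx' : w x < 0 := lt_of_le_of_ne (not_lt.mp hwx) (hno x hx hux)
  obtain ⟨z, hz, hz0⟩ := hne
  have hwz := h0 z hz hz0
  obtain ⟨y, hy, hy1, hy2⟩ := hT {y | 0 < u y ∧ w y < 0} {y | u y < 0 ∨ 0 < w y}
    ((isOpen_lt continuous_const hu).inter (isOpen_lt hw continuous_const))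
    ((isOpen_lt hu continuous_const).union (isOpen_lt continuous_const hw))
    (by
      intro y hy
      rcases lt_trichotomy (u y) 0 with h | h | h
      · exact Or.inr (Or.inl h)
      · exact Or.inr (Or.inr (h0 y hy h))
      · rcases lt_trichotomy (w y) 0 with h' | h' | h'
        · exact Or.inl ⟨h, h'⟩
        · exact absurd h' (hno y hy h)
        · exact Or.inr (Or.inr h'))
    ⟨x, hx, hux, hwx'⟩ ⟨z, hz, Or.inr hwz⟩
  simp only [mem_ofPred_eq] at hy1 hy2
  rcases hy2 with h | h <;> linarith [hy1.1, hy1.2]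

theorem aux_one_side {X : Type*} [TopologicalSpace X] {T : Set X} (hT : IsPreconnected T)
    {u : X → ℝ} (hu : Continuous u) (h0 : ∀ x ∈ T, u x ≠ 0) {x : X} (hx : x ∈ T)
    (hux : 0 < u x) : ∀ y ∈ T, 0 < u y := by
  intro y hy
  by_contra h
  have h' : u y < 0 := lt_of_le_of_ne (not_lt.mp h) (h0 y hy)
  obtain ⟨z, hz, hz0⟩ := hT.intermediate_value hy hx hu.continuousOn ⟨h'.le, hux.le⟩
  exact h0 z hz hz0

namespace Arrangement

variable {d n : ℕ} (𝓗 : Arrangement d n)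

def uu (i : Fin n) (x : Fin d → ℝ) : ℝ := ∑ j, 𝓗.normal i j * x j - 𝓗.offset i

theorem uu_cont (i : Fin n) : Continuous (𝓗.uu i) := by
  unfold uu; fun_prop

theorem mem_H (i : Fin n) (x) : x ∈ 𝓗.H i ↔ 𝓗.uu i x = 0 := by
  simp [H, uu, sub_eq_zero]
theorem mem_pos (i : Fin n) (x) : x ∈ 𝓗.pos i ↔ 0 < 𝓗.uu i x := by
  simp [pos, uu]
theorem mem_neg (i : Fin n) (x) : x ∈ 𝓗.neg i ↔ 𝓗.uu i x < 0 := by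
  simp [neg, uu]

theorem uu_add (i : Fin n) (x v : Fin d → ℝ) (t : ℝ) :
    𝓗.uu i (x + t • v) = 𝓗.uu i x + t * ∑ j, 𝓗.normal i j * v j := by
  simp only [uu, Pi.add_apply, Pi.smul_apply, smul_eq_mul, mul_add, Finset.sum_add_distrib,
    Finset.mul_sum]
  have : ∀ j, 𝓗.normal i j * (t * v j) = t * (𝓗.normal i j * v j) := fun j => by ring
  simp only [this]
  ring

/-- interior points of a closed halfspace, sign `s`. -/
theorem pos_of_interior (s : ℝ) (hs : s ≠ 0) (i : Fin n) (U : Set (Fin d → ℝ)) (hU : IsOpen U)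
    (h : ∀ x ∈ U, 0 ≤ s * 𝓗.uu i x) (x) (hx : x ∈ U) : 0 < s * 𝓗.uu i x := by
  refine lt_of_le_of_ne (h x hx) fun h0 => ?_
  have hn : 0 < ∑ j, 𝓗.normal i j * 𝓗.normal i j := by
    obtain ⟨j, hj⟩ := Function.ne_iff.mp (𝓗.normal_ne i)
    exact Finset.sum_pos' (fun j _ => mul_self_nonneg _)
      ⟨j, Finset.mem_univ _, mul_self_pos.mpr hj⟩
  have hc : Continuous fun t : ℝ => x + (t * (-s)) • 𝓗.normal i := by fun_prop
  have hev : ∀ᶠ t in 𝓝[>] (0:ℝ), x + (t * (-s)) • 𝓗.normal i ∈ U :=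
    nhdsWithin_le_nhds (hc.continuousAt.eventually_mem (by simpa using hU.mem_nhds hx))
  obtain ⟨t, ht, ht0⟩ := (hev.and self_mem_nhdsWithin).exists
  have h1 := h _ ht
  rw [uu_add, mul_add, ← h0] at h1
  have ht0' : 0 < t := ht0
  have : 0 < t * (s * s) * ∑ j, 𝓗.normal i j * 𝓗.normal i j :=
    mul_pos (mul_pos ht0' (mul_self_pos.mpr hs)) hn
  nlinarith

/-- The half of `S` on side `s`. -/
theorem thick_half (S : Set (Set (Fin d → ℝ))) (hS : S ⊆ 𝓗.chambers) (e : Fin n)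
    (s : ℝ) (hs : s ≠ 0) :
    thickening {C ∈ S | C ⊆ {x | 0 < s * 𝓗.uu e x}} =
      thickening S ∩ {x | 0 < s * 𝓗.uu e x} := by
  have hcont : Continuous fun x => s * 𝓗.uu e x := continuous_const.mul (𝓗.uu_cont e)
  have hopen : IsOpen {x | 0 < s * 𝓗.uu e x} := isOpen_lt continuous_const hcont
  apply Subset.antisymm
  · intro x hx
    refine ⟨interior_mono (closure_mono (biUnion_subset_biUnion_left fun C hC => hC.1)) hx, ?_⟩
    refine 𝓗.pos_of_interior s hs e _ isOpen_interior (fun y hy => ?_) x hx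
    have h2 : closure (⋃ C ∈ {C ∈ S | C ⊆ {x | 0 < s * 𝓗.uu e x}}, C) ⊆
        {x | 0 ≤ s * 𝓗.uu e x} := by
      refine closure_minimal (iUnion₂_subset fun C hC y hy => ?_)
        (isClosed_le continuous_const hcont)
      have h3 : 0 < s * 𝓗.uu e y := hC.2 hy
      exact h3.le
    exact h2 (interior_subset hy)
  · refine interior_maximal ?_ (isOpen_interior.inter hopen)
    rintro x ⟨hx, hxe⟩
    have hx' := interior_subset hx
    have := hopen.inter_closure ⟨hxe, hx'⟩
    refine closure_mono ?_ this
    rintro y ⟨hye, hy⟩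
    obtain ⟨C, hC, hyC⟩ := mem_iUnion₂.mp hy
    refine mem_iUnion₂.mpr ⟨C, ⟨hC, ?_⟩, hyC⟩
    obtain ⟨z, hz, rfl⟩ := hS hC
    refine aux_one_side isPreconnected_connectedComponentIn hcont (fun w hw => ?_) hyC hye
    have := connectedComponentIn_subset _ _ hw e
    rw [mem_H] at this
    exact mul_ne_zero hs this

theorem exists_dir (hgp : 𝓗.GeneralPosition) (A : Finset (Fin n)) (e : Fin n) (heA : e ∈ A)
    (hne : (⋂ i ∈ A, 𝓗.H i).Nonempty) :
    ∃ v : Fin d → ℝ, (∀ i ∈ A.erase e, ∑ j, 𝓗.normal i j * v j = 0) ∧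
      ∑ j, 𝓗.normal e j * v j = 1 := by
  have hcard : A.card ≤ d := by
    by_contra h
    obtain ⟨B, hB, hBc⟩ := Finset.exists_subset_card_eq (show d + 1 ≤ A.card by omega)
    obtain ⟨x, hx⟩ := hne
    have : x ∈ ⋂ i ∈ B, 𝓗.H i := by
      simp only [mem_iInter] at hx ⊢
      exact fun i hi => hx i (hB hi)
    rw [hgp.2 B hBc] at this
    exact this
  have hli := hgp.1 A hcard
  let M : Matrix A (Fin d) ℝ := fun i => 𝓗.normal i.1
  have hsurj : Function.Surjective M.mulVec := by
    have h : M.rank = Fintype.card A :=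
      LinearIndependent.rank_matrix (show LinearIndependent ℝ M.row from hli)
    have h2 : LinearMap.range M.mulVecLin = ⊤ := by
      apply Submodule.eq_top_of_finrank_eq
      rw [Module.finrank_fintype_fun_eq_card]
      exact h
    exact LinearMap.range_eq_top.mp h2
  obtain ⟨v, hv⟩ := hsurj (Pi.single ⟨e, heA⟩ 1)
  refine ⟨v, fun i hi => ?_, ?_⟩
  · have := congrFun hv ⟨i, Finset.mem_of_mem_erase hi⟩
    rw [Pi.single_eq_of_ne (by simpa using Finset.ne_of_mem_erase hi)] at this
    exact this
  · have := congrFun hv ⟨e, heA⟩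
    rw [Pi.single_eq_same] at this
    exact this

theorem mem_stratum (S) (A : Finset (Fin n)) (x) :
    x ∈ 𝓗.stratum S A ↔ x ∈ thickening S ∧ ∀ i ∈ A, 𝓗.uu i x = 0 := by
  simp [stratum, mem_H]

theorem mem_half (S : Set (Set (Fin d → ℝ))) (hS : S ⊆ 𝓗.chambers) (e : Fin n)
    (s : ℝ) (hs : s ≠ 0) (B : Finset (Fin n)) (x) :
    x ∈ 𝓗.stratum {C ∈ S | C ⊆ {x | 0 < s * 𝓗.uu e x}} B ↔
      x ∈ 𝓗.stratum S B ∧ 0 < s * 𝓗.uu e x := by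
  rw [mem_stratum, mem_stratum, 𝓗.thick_half S hS e s hs]
  simp only [mem_inter_iff, mem_ofPred_eq]; tauto

theorem closure_half (hgp : 𝓗.GeneralPosition) (S : Set (Set (Fin d → ℝ)))
    (hS : S ⊆ 𝓗.chambers) (e : Fin n) (s : ℝ) (hs : s ≠ 0) (A : Finset (Fin n)) (heA : e ∈ A) :
    closure (𝓗.stratum S A) ⊆
      closure (𝓗.stratum {C ∈ S | C ⊆ {x | 0 < s * 𝓗.uu e x}} (A.erase e)) := by
  refine closure_minimal (fun x hx => ?_) isClosed_closure
  obtain ⟨v, hv, hve⟩ := 𝓗.exists_dir hgp A e heA ⟨x, hx.2⟩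
  rw [mem_stratum] at hx
  have hc : Continuous fun t : ℝ => x + (t * s) • v := by fun_prop
  have htd : Filter.Tendsto (fun t : ℝ => x + (t * s) • v) (𝓝[>] 0) (𝓝 x) := by
    have := hc.tendsto 0
    simp only [zero_mul, zero_smul, add_zero] at this
    exact this.mono_left nhdsWithin_le_nhds
  refine mem_closure_of_tendsto htd ?_
  filter_upwards [htd.eventually_mem (isOpen_interior.mem_nhds hx.1), self_mem_nhdsWithin]
    with t ht ht0
  have ht0' : 0 < t := ht0
  rw [𝓗.mem_half S hS e s hs, mem_stratum]
  refine ⟨⟨ht, fun i hi => ?_⟩, ?_⟩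
  · rw [uu_add, hv i hi, hx.2 i (Finset.mem_of_mem_erase hi)]; simp
  · rw [uu_add, hve, hx.2 e heA]
    have := mul_pos ht0' (mul_self_pos.mpr hs)
    linarith

/-- If the half on side `s` does not meet `H_f`, it is bounded by `H_f`. -/
theorem half_bounds (hgp : 𝓗.GeneralPosition)
    (S : Set (Set (Fin d → ℝ))) (hS : S ⊆ 𝓗.chambers)
    (hsc : 𝓗.StrataConnected S) (e : Fin n) (s : ℝ) (hs : s ≠ 0)
    (A : Finset (Fin n)) (hA : A ∈ 𝓗.supp S) (heA : e ∈ A)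
    (f : Fin n) (hf : 𝓗.Bounds f S A)
    (hno : ¬ (𝓗.stratum {C ∈ S | C ⊆ {x | 0 < s * 𝓗.uu e x}} (A.erase e) ∩ 𝓗.H f).Nonempty) :
    𝓗.Bounds f {C ∈ S | C ⊆ {x | 0 < s * 𝓗.uu e x}} (A.erase e) := by
  have hsub : ∀ x ∈ 𝓗.stratum S (A.erase e), 𝓗.uu e x = 0 → x ∈ 𝓗.stratum S A := by
    intro x hx hx0
    rw [mem_stratum] at hx ⊢
    refine ⟨hx.1, fun i hi => ?_⟩
    by_cases hie : i = e
    · rwa [hie]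
    · exact hx.2 i (Finset.mem_erase.mpr ⟨hie, hi⟩)
  obtain ⟨z, hz⟩ := hA
  have hz' : z ∈ 𝓗.stratum S (A.erase e) ∧ 𝓗.uu e z = 0 := by
    rw [mem_stratum] at hz ⊢
    exact ⟨⟨hz.1, fun i hi => hz.2 i (Finset.mem_of_mem_erase hi)⟩, hz.2 e heA⟩
  have hT := (hsc _ ⟨z, hz'.1⟩).isPreconnected
  have hcont : Continuous fun x => s * 𝓗.uu e x := continuous_const.mul (𝓗.uu_cont e)
  have hno' : ∀ x ∈ 𝓗.stratum S (A.erase e), 0 < s * 𝓗.uu e x → 𝓗.uu f x ≠ 0 := by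
    intro x hx hxe h0
    exact hno ⟨x, (𝓗.mem_half S hS e s hs _ x).mpr ⟨hx, hxe⟩, (𝓗.mem_H f x).mpr h0⟩
  obtain ⟨hside, p, ⟨hpf, hpc⟩, hpA⟩ := hf
  refine ⟨?_, p, ⟨hpf, 𝓗.closure_half hgp S hS e s hs A heA hpc⟩, ?_⟩
  · rcases hside with h | h
    · left
      intro x hx
      rw [𝓗.mem_half S hS e s hs] at hx
      rw [mem_pos]
      refine aux_side hT hcont (𝓗.uu_cont f) (fun y hy hy0 => ?_) ⟨z, hz'.1, by simp [hz'.2]⟩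
        hno' x hx.1 hx.2
      exact (𝓗.mem_pos f y).mp (h (hsub y hy ((mul_eq_zero.mp hy0).resolve_left hs)))
    · right
      intro x hx
      rw [𝓗.mem_half S hS e s hs] at hx
      rw [mem_neg, ← neg_pos]
      refine aux_side hT hcont (𝓗.uu_cont f).neg (fun y hy hy0 => ?_) ⟨z, hz'.1, by simp [hz'.2]⟩
        (fun y hy hy0 => neg_ne_zero.mpr (hno' y hy hy0)) x hx.1 hx.2
      exact neg_pos.mpr
        ((𝓗.mem_neg f y).mp (h (hsub y hy ((mul_eq_zero.mp hy0).resolve_left hs))))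
  · simp only [mem_iInter] at hpA ⊢
    exact fun i hi => hpA i (Finset.mem_of_mem_erase hi)

end Arrangement

/-- Let `S` be strata-connected, let `H_e` intersect `T_S`, let
`A ∈ supp S` with `e ∈ A`, and set `A' := A \ {e}`. If `H_f` bounds `T_S(A)`, then
either `H_f` bounds both `T_{S⁺}(A')` and `T_{S⁻}(A')`, or it bounds one of them and
intersects the other. -/
theorem stmt4 {d n : ℕ} (𝓗 : Arrangement d n) (hgp : 𝓗.GeneralPosition)
    (S : Set (Set (Fin d → ℝ))) (hS : S ⊆ 𝓗.chambers)
    (hsc : 𝓗.StrataConnected S)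
    (e : Fin n) (hint : (thickening S ∩ 𝓗.H e).Nonempty)
    (A : Finset (Fin n)) (hA : A ∈ 𝓗.supp S) (heA : e ∈ A)
    (f : Fin n) (hf : 𝓗.Bounds f S A) :
    (𝓗.Bounds f {C ∈ S | C ⊆ 𝓗.pos e} (A.erase e) ∧
        𝓗.Bounds f {C ∈ S | C ⊆ 𝓗.neg e} (A.erase e)) ∨
    (𝓗.Bounds f {C ∈ S | C ⊆ 𝓗.pos e} (A.erase e) ∧
        (𝓗.stratum {C ∈ S | C ⊆ 𝓗.neg e} (A.erase e) ∩ 𝓗.H f).Nonempty) ∨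
    (𝓗.Bounds f {C ∈ S | C ⊆ 𝓗.neg e} (A.erase e) ∧
        (𝓗.stratum {C ∈ S | C ⊆ 𝓗.pos e} (A.erase e) ∩ 𝓗.H f).Nonempty) := by
  have hp : 𝓗.pos e = {x | 0 < (1:ℝ) * 𝓗.uu e x} := by
    ext x; simp [𝓗.mem_pos]
  have hn : 𝓗.neg e = {x | 0 < (-1:ℝ) * 𝓗.uu e x} := by
    ext x; simp [𝓗.mem_neg]
  rw [hp, hn]
  have key := fun s hs => 𝓗.half_bounds hgp S hS hsc e s hs A hA heA f hf
  have k1 := key 1 one_ne_zero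
  have k2 := key (-1) (by norm_num)
  by_cases h1 : (𝓗.stratum {C ∈ S | C ⊆ {x | 0 < (1:ℝ) * 𝓗.uu e x}} (A.erase e) ∩
      𝓗.H f).Nonempty
  · refine Or.inr (Or.inr ⟨k2 ?_, h1⟩)
    rintro ⟨y, hy, hyf⟩
    obtain ⟨x, hx, hxf⟩ := h1
    rw [𝓗.mem_half S hS e _ one_ne_zero] at hx
    rw [𝓗.mem_half S hS e _ (by norm_num)] at hy
    rw [𝓗.mem_H] at hxf hyf
    have hins : ∀ w, w ∈ 𝓗.stratum S (insert f (A.erase e)) ↔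
        w ∈ 𝓗.stratum S (A.erase e) ∧ 𝓗.uu f w = 0 := by
      intro w
      rw [𝓗.mem_stratum, 𝓗.mem_stratum, Finset.forall_mem_insert]
      tauto
    have hxm := (hins x).mpr ⟨hx.1, hxf⟩
    have hym := (hins y).mpr ⟨hy.1, hyf⟩
    have hT := (hsc _ ⟨x, hxm⟩).isPreconnected
    have := aux_one_side hT (𝓗.uu_cont e) (fun w hw hw0 => ?_) hxm (by linarith [hx.2]) y hym
    · linarith [hy.2]
    · obtain ⟨hw1, hw2⟩ := (hins w).mp hw
      have hwA : w ∈ 𝓗.stratum S A := by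
        rw [𝓗.mem_stratum] at hw1 ⊢
        refine ⟨hw1.1, fun i hi => ?_⟩
        by_cases hie : i = e
        · rwa [hie]
        · exact hw1.2 i (Finset.mem_erase.mpr ⟨hie, hi⟩)
      rcases hf.1 with h | h
      · have := (𝓗.mem_pos f w).mp (h hwA)
        linarith
      · have := (𝓗.mem_neg f w).mp (h hwA)
        linarith
  · by_cases h2 : (𝓗.stratum {C ∈ S | C ⊆ {x | 0 < (-1:ℝ) * 𝓗.uu e x}} (A.erase e) ∩
      𝓗.H f).Nonempty
    · exact Or.inr (Or.inl ⟨k1 h1, h2⟩)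
    · exact Or.inl ⟨k1 h1, k2 h2⟩
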